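/- arXiv:1611.06699 — 3 statements merged into one kernel-verified Lean document; each statement's English description precedes it below -/
import Mathlib

section
/- Let t be an irrational real number, let (ε_n)_{n≥1} be a sequence of positive real numbers converging to 0, and let f be a real-valued continuous function on [0,1]. Then ε_n ∑_{j=1}^{⌈1/ε_n⌉ − 1} f(jε_n) · 1_{jε_n ≥ 1 − {jt}} converges as n → ∞ to ∫₀¹ x f(x) dx, where 1_{jε_n ≥ 1 − {jt}} equals 1 if jε_n ≥ 1 − {jt} and 0 otherwise. -/
open Filter Finset

/-!
Write `ψ x = {x} - 1 / 2`. For `0 ≤ y < 1` the indicator of `y ≥ 1 - {x}` is `y + ψ x - ψ (x + y)`.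
At `x = jt`, `y = jε`, the term `y` gives a Riemann sum of `x f x`, so it suffices that
`ε ∑ ψ (js) f (jε)` tends to `0` both for `s = t` and for `s = t + ε`, which follows from a bound
uniform in `s` near `t`. If `r = p / q` in lowest terms satisfies `|t - r| < 1 / q ^ 2`, the
distribution relation `∑ i < q, ψ (x + ir) = ψ (qx)` bounds the sum of `ψ (js)` over any `q`
consecutive `j` by `5 / 2`, while `f (jε)` is nearly constant over such a block. Irrationality of
`t` provides such `r` with `q` arbitrarily large.
-/

open MeasureTheory
open scoped Topology

/-- The sawtooth function `x ↦ {x} - 1 / 2`, the mean-zero normalization of the fractional part.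
It takes the value `-1 / 2` at the integers. -/
noncomputable def sawtooth (x : ℝ) : ℝ := Int.fract x - 1 / 2

lemma abs_sawtooth_le (x : ℝ) : |sawtooth x| ≤ 1 / 2 := by
  rw [sawtooth, abs_le]
  constructor <;> linarith [Int.fract_nonneg x, Int.fract_lt_one x]

lemma sawtooth_le_add_sub {x y : ℝ} (hxy : x ≤ y) : sawtooth y ≤ sawtooth x + (y - x) := by
  have hfloor : (⌊x⌋ : ℝ) ≤ ⌊y⌋ := mod_cast Int.floor_le_floor hxy
  simp only [sawtooth, Int.fract]
  linarith

lemma ite_one_sub_fract_le_eq {x y : ℝ} (hy : y ∈ Set.Ico 0 1) :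
    (if 1 - Int.fract x ≤ y then (1 : ℝ) else 0) = y + sawtooth x - sawtooth (x + y) := by
  obtain ⟨hy0, hy1⟩ := hy
  have hx0 := Int.fract_nonneg x
  have hx1 := Int.fract_lt_one x
  simp only [sawtooth]
  split_ifs with h
  · have hfract : Int.fract (x + y) = Int.fract x + y - 1 := by
      refine Int.fract_eq_iff.2 ⟨by linarith, by linarith, ⌊x⌋ + 1, ?_⟩
      rw [Int.fract]; push_cast; ring
    rw [hfract]; ring
  · have hfract : Int.fract (x + y) = Int.fract x + y :=
      Int.fract_eq_iff.2 ⟨by linarith, by linarith, ⌊x⌋, by rw [Int.fract]; ring⟩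
    rw [hfract]; ring

lemma sum_range_add_mul_emod {M : Type*} [AddCommMonoid M] {p : ℤ} {q : ℕ} (hq : q ≠ 0)
    (hpq : IsCoprime p q) (m : ℤ) (F : ℤ → M) :
    ∑ i ∈ range q, F ((m + i * p) % q) = ∑ i ∈ range q, F i := by
  have : NeZero q := ⟨hq⟩
  have sum_zmod (G : ZMod q → M) : ∑ i ∈ range q, G i = ∑ z, G z :=
    sum_nbij' (fun i ↦ (i : ZMod q)) ZMod.val (by simp) (by simp [ZMod.val_lt])
      (fun i hi ↦ ZMod.val_cast_of_lt (mem_range.1 hi)) (by simp) (by simp)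
  obtain ⟨u, hu⟩ : IsUnit (p : ZMod q) := (ZMod.coe_int_isUnit_iff_isCoprime p q).2 hpq.symm
  let e : Equiv.Perm (ZMod q) := u.mulRight.trans (Equiv.addLeft (m : ZMod q))
  calc ∑ i ∈ range q, F ((m + i * p) % q)
      = ∑ i ∈ range q, F (e i).val := by
        refine sum_congr rfl fun i _ ↦ ?_
        simp [e, hu, ← ZMod.val_intCast]
    _ = ∑ z, F (e z).val := sum_zmod fun z ↦ F (e z).val
    _ = ∑ z : ZMod q, F z.val := Equiv.sum_comp e fun z ↦ F z.val
    _ = ∑ i ∈ range q, F (i : ZMod q).val := (sum_zmod fun z ↦ F z.val).symm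
    _ = ∑ i ∈ range q, F i :=
        sum_congr rfl fun i hi ↦ by rw [ZMod.val_cast_of_lt (mem_range.1 hi)]

lemma fract_div_natCast_eq {k : Type*} [Field k] [LinearOrder k] [IsStrictOrderedRing k]
    [FloorRing k] (x : k) {q : ℕ} (hq : q ≠ 0) :
    Int.fract (x / q) = ((⌊x⌋ % q : ℤ) + Int.fract x) / q := by
  have hdiv : ((⌊x⌋ % q : ℤ) : k) + q * (⌊x⌋ / q : ℤ) = ⌊x⌋ :=
    mod_cast Int.emod_add_mul_ediv ⌊x⌋ q
  rw [Int.fract, Int.floor_div_natCast, Int.fract, ← hdiv]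
  field_simp
  ring

lemma sum_sawtooth_add_mul_rat (r : ℚ) (x : ℝ) :
    ∑ i ∈ range r.den, sawtooth (x + i * r) = sawtooth (r.den * x) := by
  have hden : (r.den : ℝ) ≠ 0 := mod_cast r.den_nz
  have hfract (i : ℕ) : Int.fract (x + i * r) =
      ((⌊r.den * x⌋ + i * r.num) % r.den : ℤ) / r.den + Int.fract (r.den * x) / r.den := by
    have hx : x + i * r = (r.den * x + (i * r.num : ℤ)) / r.den := by
      rw [Rat.cast_def]; push_cast; field_simp
    rw [hx, fract_div_natCast_eq _ r.den_nz, Int.floor_add_intCast, Int.fract_add_intCast, add_div]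
  have hgauss : (∑ i ∈ range r.den, (i : ℝ)) * 2 = r.den * (r.den - 1) := by
    simpa [Nat.cast_pred r.den_pos] using
      congrArg (Nat.cast (R := ℝ)) (sum_range_id_mul_two r.den)
  simp only [sawtooth, hfract, sum_sub_distrib, sum_add_distrib, sum_const, card_range,
    nsmul_eq_mul, ← sum_div]
  rw [sum_range_add_mul_emod r.den_nz r.isCoprime_num_den _ (fun z ↦ (z : ℝ))]
  simp only [Int.cast_natCast]
  rw [eq_div_of_mul_eq two_ne_zero hgauss]
  field_simp
  ring

lemma abs_sum_sawtooth_add_mul_le {r : ℚ} {s : ℝ} (hs : |s - r| ≤ 1 / (r.den : ℝ) ^ 2) (x : ℝ) :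
    |∑ i ∈ range r.den, sawtooth (x + i * s)| ≤ 5 / 2 := by
  have hclose {i : ℕ} (hi : i ∈ range r.den) : |i * s - i * r| ≤ 1 / r.den := by
    have hi' : (i : ℝ) ≤ r.den := mod_cast (mem_range.1 hi).le
    calc |i * s - i * r| = i * |s - r| := by rw [← mul_sub, abs_mul, Nat.abs_cast]
      _ ≤ r.den * (1 / (r.den : ℝ) ^ 2) := by gcongr
      _ = 1 / r.den := by field_simp
  have hsum_const : ∑ _i ∈ range r.den, 2 * (1 / r.den : ℝ) = 2 := by
    rw [sum_const, card_range, nsmul_eq_mul]; field_simp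
  have hlower : sawtooth (r.den * (x + 1 / r.den)) ≤
      ∑ i ∈ range r.den, sawtooth (x + i * s) + 2 := by
    rw [← sum_sawtooth_add_mul_rat, ← hsum_const, ← sum_add_distrib]
    refine sum_le_sum fun i hi ↦ ?_
    obtain ⟨hge, hle⟩ := abs_le.1 (hclose hi)
    linarith [sawtooth_le_add_sub (x := x + i * s) (y := x + 1 / r.den + i * r) (by linarith)]
  have hupper : ∑ i ∈ range r.den, sawtooth (x + i * s) ≤
      sawtooth (r.den * (x - 1 / r.den)) + 2 := by
    rw [← sum_sawtooth_add_mul_rat, ← hsum_const, ← sum_add_distrib]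
    refine sum_le_sum fun i hi ↦ ?_
    obtain ⟨hge, hle⟩ := abs_le.1 (hclose hi)
    linarith [sawtooth_le_add_sub (x := x - 1 / r.den + i * r) (y := x + i * s) (by linarith)]
  have hge := (abs_le.1 (abs_sawtooth_le (r.den * (x + 1 / r.den)))).1
  have hle := (abs_le.1 (abs_sawtooth_le (r.den * (x - 1 / r.den)))).2
  exact abs_le.2 ⟨by linarith, by linarith⟩

lemma exists_rat_lt_den_abs_sub_lt {t : ℝ} (ht : Irrational t) (K : ℝ) :
    ∃ r : ℚ, K < r.den ∧ |t - r| < 1 / (r.den : ℝ) ^ 2 := by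
  obtain ⟨n, hn⟩ := exists_nat_gt K
  obtain ⟨m, hm⟩ := (tendsto_one_div_add_atTop_nhds_zero_nat.eventually
    (ht.eventually_forall_le_dist_cast_rat_of_den_le n)).exists
  obtain ⟨r, hr, hrm⟩ := Real.exists_rat_abs_sub_le_and_den_le t m.succ_pos
  have hden : (1 : ℝ) ≤ r.den := mod_cast r.den_pos
  have hrm' : (r.den : ℝ) ≤ m + 1 := mod_cast hrm
  push_cast at hr
  have hdist : dist t r < 1 / (m + 1) :=
    hr.trans_lt (one_div_lt_one_div_of_lt (by positivity) (by nlinarith))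
  have hnr : n < r.den := lt_of_not_ge fun hrn ↦ (hm r hrn).not_gt hdist
  refine ⟨r, hn.trans (mod_cast hnr), hr.trans_lt ?_⟩
  exact one_div_lt_one_div_of_lt (by positivity) (by nlinarith)

lemma sum_Icc_one_pred_eq_sum_range {M : Type*} [AddCommMonoid M] {g : ℕ → M} (hg : g 0 = 0)
    (n : ℕ) : ∑ j ∈ Icc 1 (n - 1), g j = ∑ j ∈ range n, g j := by
  refine sum_subset (fun j hj ↦ ?_) fun j hj hj' ↦ ?_
  · simp only [mem_Icc, mem_range] at hj ⊢; lia
  · obtain rfl : j = 0 := by simp only [mem_Icc, mem_range] at hj hj'; lia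
    exact hg

lemma add_mul_mem_Ico_of_lt_ceil {a b ε : ℝ} (hε : 0 < ε) {j : ℕ}
    (hj : j < ⌈(b - a) / ε⌉₊) :
    a + j * ε ∈ Set.Ico a b := by
  have := (lt_div_iff₀ hε).1 (Nat.lt_ceil.1 hj)
  exact ⟨le_add_of_nonneg_right (by positivity), by linarith⟩

lemma tendsto_mul_ceil_div {a b : ℝ} (hab : a ≤ b) :
    Tendsto (fun ε : ℝ ↦ ε * ⌈(b - a) / ε⌉₊) (𝓝[>] 0) (𝓝 (b - a)) := by
  refine ((tendsto_nat_ceil_mul_div_atTop (sub_nonneg.2 hab)).comp tendsto_inv_nhdsGT_zero).congr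
    fun ε ↦ ?_
  simp only [Function.comp_apply, div_inv_eq_mul, ← div_eq_mul_inv, mul_comm]

lemma dist_add_mul_add_mul_le {ε : ℝ} (hε : 0 ≤ ε) {i q : ℕ} (hi : i ≤ q) (a : ℝ) (j : ℕ) :
    dist (a + (j + i : ℕ) * ε) (a + j * ε) ≤ q * ε := by
  rw [dist_add_left, Real.dist_eq, ← sub_mul, Nat.cast_add, add_sub_cancel_left,
    abs_of_nonneg (by positivity)]
  gcongr

section NormedSpace

variable {E : Type*} [NormedAddCommGroup E]

lemma norm_sum_range_le_of_forall_block {v : ℕ → E} {q : ℕ} {B M : ℝ} (hq : q ≠ 0)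
    (hM : ∀ j, ‖v j‖ ≤ M) (hB : ∀ k, ‖∑ i ∈ range q, v (k + i)‖ ≤ B) (N : ℕ) :
    ‖∑ j ∈ range N, v j‖ ≤ N * (B / q) + q * M := by
  have hB0 : 0 ≤ B := (norm_nonneg _).trans (hB 0)
  have hM0 : 0 ≤ M := (norm_nonneg _).trans (hM 0)
  induction N using Nat.strong_induction_on with
  | _ N ih =>
    rcases lt_or_ge N q with hNq | hqN
    · calc ‖∑ j ∈ range N, v j‖ ≤ N * M := by
            simpa using norm_sum_le_of_le (range N) fun j _ ↦ hM j
        _ ≤ q * M := by gcongr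
        _ ≤ N * (B / q) + q * M := le_add_of_nonneg_left (by positivity)
    · obtain ⟨k, rfl⟩ := Nat.exists_eq_add_of_le' hqN
      calc ‖∑ j ∈ range (k + q), v j‖
          ≤ ‖∑ j ∈ range k, v j‖ + ‖∑ i ∈ range q, v (k + i)‖ := by
            rw [sum_range_add]; exact norm_add_le _ _
        _ ≤ k * (B / q) + q * M + B := add_le_add (ih k (by lia)) (hB k)
        _ = (k + q : ℕ) * (B / q) + q * M := by push_cast; field_simp; ring

lemma exists_uniformContinuous_bounded_eqOn_Icc {f : ℝ → E} {a b : ℝ} (hab : a ≤ b)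
    (hf : ContinuousOn f (Set.Icc a b)) :
    ∃ F : ℝ → E, UniformContinuous F ∧ (∃ M, ∀ x, ‖F x‖ ≤ M) ∧ Set.EqOn F f (Set.Icc a b) := by
  obtain ⟨M, hM⟩ := isCompact_Icc.exists_bound_of_continuousOn hf
  refine ⟨Set.IccExtend hab ((Set.Icc a b).domRestrict f), ?_, ⟨M, fun x ↦ ?_⟩, fun x hx ↦ ?_⟩
  · exact (CompactSpace.uniformContinuous_of_continuous hf.domRestrict).comp
      (LipschitzWith.projIcc hab).uniformContinuous
  · exact hM _ (Set.projIcc a b hab x).2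
  · exact Set.IccExtend_of_mem hab _ hx

variable [NormedSpace ℝ E]

lemma norm_sum_smul_le_of_forall_norm_sub_le {ι : Type*} {s : Finset ι} {a : ι → ℝ} {g : ι → E}
    {c : E} {A C η : ℝ} (ha : ∀ i ∈ s, |a i| ≤ A) (hsum : |∑ i ∈ s, a i| ≤ C)
    (hg : ∀ i ∈ s, ‖g i - c‖ ≤ η) :
    ‖∑ i ∈ s, a i • g i‖ ≤ C * ‖c‖ + #s * (A * η) := by
  calc ‖∑ i ∈ s, a i • g i‖ = ‖(∑ i ∈ s, a i) • c + ∑ i ∈ s, a i • (g i - c)‖ := by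
        simp only [smul_sub, sum_sub_distrib, sum_smul, add_sub_cancel]
    _ ≤ |∑ i ∈ s, a i| * ‖c‖ + ∑ _i ∈ s, A * η := by
        refine norm_add_le_of_le (norm_smul _ _).le (norm_sum_le_of_le s fun i hi ↦ ?_)
        rw [norm_smul]
        exact mul_le_mul (ha i hi) (hg i hi) (norm_nonneg _) ((abs_nonneg _).trans (ha i hi))
    _ ≤ C * ‖c‖ + #s * (A * η) := by
        rw [sum_const, nsmul_eq_mul]
        gcongr

lemma norm_sum_sawtooth_smul_le {r : ℚ} {s : ℝ} (hs : |s - r| ≤ 1 / (r.den : ℝ) ^ 2) {g : ℕ → E}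
    {M η : ℝ} (hM : ∀ j, ‖g j‖ ≤ M) (hη : ∀ j, ∀ i < r.den, ‖g (j + i) - g j‖ ≤ η) (N : ℕ) :
    ‖∑ j ∈ range N, sawtooth (j * s) • g j‖ ≤
      N * (5 / 2 * M / r.den + η / 2) + r.den * (M / 2) := by
  have hden : (r.den : ℝ) ≠ 0 := mod_cast r.den_nz
  have hterm (j : ℕ) : ‖sawtooth (j * s) • g j‖ ≤ M / 2 := by
    rw [norm_smul, div_eq_inv_mul, ← one_div]
    exact mul_le_mul (abs_sawtooth_le _) (hM j) (norm_nonneg _) (by norm_num)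
  have hblock (k : ℕ) : ‖∑ i ∈ range r.den, sawtooth ((k + i : ℕ) * s) • g (k + i)‖ ≤
      5 / 2 * M + r.den * (η / 2) := by
    have hsum : |∑ i ∈ range r.den, sawtooth ((k + i : ℕ) * s)| ≤ 5 / 2 := by
      simpa only [Nat.cast_add, add_mul] using abs_sum_sawtooth_add_mul_le hs (k * s)
    calc _ ≤ 5 / 2 * ‖g k‖ + #(range r.den) * (1 / 2 * η) :=
          norm_sum_smul_le_of_forall_norm_sub_le (fun i _ ↦ abs_sawtooth_le _) hsum
            fun i hi ↦ hη k i (mem_range.1 hi)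
      _ ≤ 5 / 2 * M + r.den * (η / 2) := by
          rw [card_range, one_div_mul_eq_div]
          gcongr
          exact hM k
  refine (norm_sum_range_le_of_forall_block r.den_nz hterm hblock N).trans_eq ?_
  field_simp

variable {f : ℝ → E} {a b : ℝ}

lemma norm_smul_sum_sub_integral_le [CompleteSpace E] (hf : Continuous f) {h η : ℝ} (hh : 0 ≤ h)
    (hη : ∀ x y, |x - y| ≤ h → ‖f x - f y‖ ≤ η) (a : ℝ) (n : ℕ) :
    ‖h • ∑ j ∈ range n, f (a + j * h) - ∫ x in a..a + n * h, f x‖ ≤ n * (η * h) := by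
  have hint (x y : ℝ) : IntervalIntegrable f volume x y := hf.intervalIntegrable x y
  have hcell (j : ℕ) :
      ‖h • f (a + j * h) - ∫ x in a + j * h..a + (j + 1 : ℕ) * h, f x‖ ≤ η * h := by
    have hlen : a + (j + 1 : ℕ) * h - (a + j * h) = h := by push_cast; ring
    have hle : a + j * h ≤ a + (j + 1 : ℕ) * h := by linarith
    have hconst : h • f (a + j * h) =
        ∫ _x in a + j * h..a + (j + 1 : ℕ) * h, f (a + j * h) := by
      rw [intervalIntegral.integral_const, hlen]
    rw [hconst, ← intervalIntegral.integral_sub (by simp) (hint _ _)]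
    refine (intervalIntegral.norm_integral_le_of_norm_le_const (C := η) fun x hx ↦ ?_).trans_eq
      (by rw [hlen, abs_of_nonneg hh])
    rw [Set.uIoc_of_le hle] at hx
    exact hη _ _ (abs_le.2 ⟨by linarith [hx.2], by linarith [hx.1]⟩)
  have hsplit : ∫ x in a..a + n * h, f x =
      ∑ j ∈ range n, ∫ x in a + j * h..a + (j + 1 : ℕ) * h, f x := by
    simpa using (intervalIntegral.sum_integral_adjacent_intervals
      (a := fun j : ℕ ↦ a + j * h) (n := n) fun _ _ ↦ hint _ _).symm
  rw [hsplit, smul_sum, ← sum_sub_distrib]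
  simpa using norm_sum_le_of_le (range n) fun j _ ↦ hcell j

lemma tendsto_smul_sum_integral_of_uniformContinuous [CompleteSpace E] (hab : a ≤ b)
    (hf : UniformContinuous f) :
    Tendsto (fun ε : ℝ ↦ ε • ∑ j ∈ range ⌈(b - a) / ε⌉₊, f (a + j * ε)) (𝓝[>] 0)
      (𝓝 (∫ x in a..b, f x)) := by
  have hintegral : Tendsto (fun ε : ℝ ↦ ∫ x in a..a + ⌈(b - a) / ε⌉₊ * ε, f x) (𝓝[>] 0)
      (𝓝 (∫ x in a..b, f x)) := by
    have hprimitive := intervalIntegral.continuous_primitive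
      (fun x y ↦ hf.continuous.intervalIntegrable (μ := volume) x y) a
    refine (hprimitive.tendsto b).comp ?_
    simpa only [mul_comm, add_sub_cancel] using (tendsto_mul_ceil_div hab).const_add a
  refine hintegral.congr_dist (Metric.tendsto_nhds.2 fun κ hκ ↦ ?_)
  obtain ⟨η, hη, hηκ⟩ := exists_pos_mul_lt hκ (b - a)
  obtain ⟨δ, hδ, hfδ⟩ := Metric.uniformContinuous_iff_le.1 hf η hη
  filter_upwards [Ioo_mem_nhdsGT hδ,
    ((tendsto_mul_ceil_div hab).mul_const η).eventually_lt_const hηκ] with ε hεδ hεκ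
  rw [Real.dist_0_eq_abs, abs_dist, dist_comm, dist_eq_norm]
  calc _ ≤ ⌈(b - a) / ε⌉₊ * (η * ε) :=
        norm_smul_sum_sub_integral_le hf.continuous hεδ.1.le
          (fun x y hxy ↦ dist_eq_norm (f x) (f y) ▸ hfδ (hxy.trans hεδ.2.le)) a _
    _ = ε * ⌈(b - a) / ε⌉₊ * η := by ring
    _ < κ := hεκ

lemma tendsto_smul_sum_integral [CompleteSpace E] (hab : a ≤ b)
    (hf : ContinuousOn f (Set.Icc a b)) :
    Tendsto (fun ε : ℝ ↦ ε • ∑ j ∈ range ⌈(b - a) / ε⌉₊, f (a + j * ε)) (𝓝[>] 0)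
      (𝓝 (∫ x in a..b, f x)) := by
  obtain ⟨F, hF, -, hFf⟩ := exists_uniformContinuous_bounded_eqOn_Icc hab hf
  rw [← intervalIntegral.integral_congr (Set.uIcc_of_le hab ▸ hFf)]
  refine (tendsto_smul_sum_integral_of_uniformContinuous hab hF).congr' ?_
  filter_upwards [self_mem_nhdsWithin] with ε hε
  congr! 2 with j hj
  exact hFf (Set.Ico_subset_Icc_self (add_mul_mem_Ico_of_lt_ceil hε (mem_range.1 hj)))

lemma tendsto_smul_sum_sawtooth_smul_of_uniformContinuous {t : ℝ} (ht : Irrational t)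
    (hab : a ≤ b) (hf : UniformContinuous f) {M : ℝ} (hM : ∀ x, ‖f x‖ ≤ M) :
    Tendsto (fun p : ℝ × ℝ ↦ p.1 • ∑ j ∈ range ⌈(b - a) / p.1⌉₊,
      sawtooth (j * p.2) • f (a + j * p.1)) (𝓝[>] 0 ×ˢ 𝓝 t) (𝓝 0) := by
  refine Metric.tendsto_nhds.2 fun κ hκ ↦ ?_
  obtain ⟨η, hη, hηκ⟩ := exists_pos_mul_lt hκ (b - a)
  obtain ⟨r, hr, hrt⟩ := exists_rat_lt_den_abs_sub_lt ht (5 * M / η)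
  have hden : (0 : ℝ) < r.den := mod_cast r.den_pos
  have hrη : 5 / 2 * M / r.den ≤ η / 2 := by
    rw [div_lt_iff₀ hη] at hr
    rw [div_le_iff₀ hden]
    linarith
  obtain ⟨δ, hδ, hfδ⟩ := Metric.uniformContinuous_iff_le.1 hf η hη
  have hbound : Tendsto (fun ε : ℝ ↦ ε * ⌈(b - a) / ε⌉₊ * η + ε * (r.den * (M / 2))) (𝓝[>] 0)
      (𝓝 ((b - a) * η)) := by
    have hid : Tendsto (fun ε : ℝ ↦ ε) (𝓝[>] 0) (𝓝 0) := nhdsWithin_le_nhds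
    simpa using ((tendsto_mul_ceil_div hab).mul_const η).add (hid.mul_const (r.den * (M / 2)))
  have hnear : ∀ᶠ s : ℝ in 𝓝 t, |s - r| < 1 / (r.den : ℝ) ^ 2 :=
    (tendsto_id.sub_const (r : ℝ)).abs.eventually_lt_const hrt
  filter_upwards [tendsto_fst.eventually (Ioo_mem_nhdsGT (div_pos hδ hden)),
    tendsto_fst.eventually (hbound.eventually_lt_const hηκ), tendsto_snd.eventually hnear]
    with ⟨ε, s⟩ ⟨hε, hεδ⟩ hεκ hs
  have hqε : r.den * ε ≤ δ := by rw [mul_comm]; exact ((lt_div_iff₀ hden).1 hεδ).le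
  have hvar (j i : ℕ) (hi : i < r.den) : ‖f (a + (j + i : ℕ) * ε) - f (a + j * ε)‖ ≤ η := by
    rw [← dist_eq_norm]
    exact hfδ ((dist_add_mul_add_mul_le hε.le hi.le a j).trans hqε)
  rw [dist_zero_right, norm_smul, Real.norm_of_nonneg hε.le]
  calc _ ≤ ε * (⌈(b - a) / ε⌉₊ * (5 / 2 * M / r.den + η / 2) + r.den * (M / 2)) := by
        gcongr
        exact norm_sum_sawtooth_smul_le hs.le (fun j ↦ hM (a + j * ε)) hvar _
    _ ≤ ε * (⌈(b - a) / ε⌉₊ * (η / 2 + η / 2) + r.den * (M / 2)) := by gcongr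
    _ = ε * ⌈(b - a) / ε⌉₊ * η + ε * (r.den * (M / 2)) := by ring
    _ < κ := hεκ

lemma tendsto_smul_sum_sawtooth_smul {t : ℝ} (ht : Irrational t) (hab : a ≤ b)
    (hf : ContinuousOn f (Set.Icc a b)) :
    Tendsto (fun p : ℝ × ℝ ↦ p.1 • ∑ j ∈ range ⌈(b - a) / p.1⌉₊,
      sawtooth (j * p.2) • f (a + j * p.1)) (𝓝[>] 0 ×ˢ 𝓝 t) (𝓝 0) := by
  obtain ⟨F, hF, ⟨M, hM⟩, hFf⟩ := exists_uniformContinuous_bounded_eqOn_Icc hab hf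
  refine (tendsto_smul_sum_sawtooth_smul_of_uniformContinuous ht hab hF hM).congr' ?_
  filter_upwards [tendsto_fst.eventually self_mem_nhdsWithin] with p hp
  congr! 3 with j hj
  exact hFf (Set.Ico_subset_Icc_self (add_mul_mem_Ico_of_lt_ceil hp (mem_range.1 hj)))

end NormedSpace

theorem stmt_13_general {E : Type*} [NormedAddCommGroup E] [NormedSpace ℝ E] [CompleteSpace E]
    {t : ℝ} (ht : Irrational t) {f : ℝ → E} (hf : ContinuousOn f (Set.Icc 0 1)) :
    Tendsto
      (fun ε : ℝ ↦ ε • ∑ j ∈ Finset.Icc 1 (⌈1 / ε⌉₊ - 1),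
        (if 1 - Int.fract (j * t) ≤ j * ε then (1 : ℝ) else 0) • f (j * ε))
      (𝓝[>] 0) (𝓝 (∫ x in (0 : ℝ)..1, x • f x)) := by
  have hid : Tendsto (fun ε : ℝ ↦ ε) (𝓝[>] 0) (𝓝 0) := nhdsWithin_le_nhds
  have hriemann := tendsto_smul_sum_integral zero_le_one (continuousOn_id.smul hf)
  have hsawtooth := tendsto_smul_sum_sawtooth_smul ht zero_le_one hf
  have hfixed := hsawtooth.comp (tendsto_id.prodMk (tendsto_const_nhds (x := t)))
  have hmoving := hsawtooth.comp (tendsto_id.prodMk (by simpa using hid.const_add t))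
  have hlim := (hriemann.add hfixed).sub hmoving
  simp only [add_zero, sub_zero, zero_add, id_eq, Function.comp_apply, Pi.smul_apply'] at hlim
  refine hlim.congr' ?_
  filter_upwards [self_mem_nhdsWithin] with ε hε
  rw [sum_Icc_one_pred_eq_sum_range (by simp), ← smul_add, ← smul_sub, ← sum_add_distrib,
    ← sum_sub_distrib]
  congr! 2 with j hj
  have hmem := add_mul_mem_Ico_of_lt_ceil (a := 0) (b := 1) hε
    (by simpa using mem_range.1 hj)
  rw [zero_add] at hmem
  rw [ite_one_sub_fract_le_eq hmem, mul_add, sub_smul, add_smul]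

/-- If `t` is irrational, `ε_n > 0` tends to `0`, and `f` is continuous on `[0,1]`, then
`ε_n ∑_{j=1}^{⌈1/ε_n⌉ − 1} f(jε_n) 1_{jε_n ≥ 1 − {jt}} → ∫₀¹ x f(x) dx`. -/
theorem stmt_13 (t : ℝ) (ht : Irrational t) (ε : ℕ → ℝ) (hε : ∀ n, 1 ≤ n → 0 < ε n)
    (hε0 : Tendsto ε atTop (nhds 0)) (f : ℝ → ℝ) (hf : ContinuousOn f (Set.Icc 0 1)) :
    Tendsto
      (fun n : ℕ =>
        ε n * ∑ j ∈ Finset.Icc 1 (⌈1 / ε n⌉₊ - 1),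
          f ((j : ℝ) * ε n) *
            (if (j : ℝ) * ε n ≥ 1 - Int.fract ((j : ℝ) * t) then (1 : ℝ) else 0))
      atTop (nhds (∫ x in (0 : ℝ)..1, x * f x)) := by
  simpa only [Function.comp_def, smul_eq_mul, mul_comm (ite _ _ _)] using
    (stmt_13_general ht hf).comp
      (tendsto_nhdsWithin_iff.2 ⟨hε0, eventually_atTop.2 ⟨1, hε⟩⟩)
end

section
/- Let α be an irrational real number, let p be an integer and q a positive integer with p and q relatively prime, and let r be a nonzero integer and s a positive integer with r and s relatively prime. Set β := p/q + (r/s)α. Then lim_{n→∞} (1/n) ∑_{j=1}^n {jα}{jβ} = 1/4 + gcd(s,q)² / (12 s r q²). -/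
open Filter Finset

/-!
Write `B(x) = {x} - 1/2` for the first periodized Bernoulli function. With `θ = α / s`, the point
`(θ, 1)` generates a dense subgroup of the compact group `ℝ/ℤ × ℤ/q`, and the sequences `jα` and
`jβ` are the images of its multiples under the surjective homomorphisms `(x, c) ↦ s x` and
`(x, c) ↦ r x + p c / q`. Translations with dense orbits are uniquely ergodic: by equicontinuity the
Birkhoff averages of a continuous function are asymptotically constant, and the constant has to be
the Haar integral. Weak convergence of the orbit measures extends this to bounded functions that are
continuous almost everywhere, such as the product of the two fractional parts.

In the limit integral, the distribution relation `∑ c ∈ ℤ/q, B(x + c / q) = B(q x)` removes the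
cyclic factor and leaves `∫ B(s x) B(q r x) dx / q`. Used once more to average over the translations
by `1 / a`, the same relation gives `∫ B(a x) B(b x) dx = gcd(a, b)² / (12 a b)`.
-/

open MeasureTheory Topology

theorem norm_birkhoffAverage_le {X E : Type*} [NormedAddCommGroup E] [NormedSpace ℝ E]
    (T : X → X) {f : X → E} {C : ℝ} (hC : 0 ≤ C) (hf : ∀ x, ‖f x‖ ≤ C) (n : ℕ) (x : X) :
    ‖birkhoffAverage ℝ T f n x‖ ≤ C := by
  rw [birkhoffAverage, norm_smul, norm_inv, RCLike.norm_natCast]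
  refine inv_mul_le_of_le_mul₀ n.cast_nonneg hC ?_
  simpa [birkhoffSum] using norm_sum_le_of_le (range n) fun k _ ↦ hf (T^[k] x)

theorem integral_birkhoffAverage {X E : Type*} [MeasurableSpace X] [NormedAddCommGroup E]
    [NormedSpace ℝ E] {μ : Measure X} {T : X → X} (hT : MeasurePreserving T μ μ) {f : X → E}
    (hf : Integrable f μ) {n : ℕ} (hn : n ≠ 0) :
    ∫ x, birkhoffAverage ℝ T f n x ∂μ = ∫ x, f x ∂μ := by
  have integral_iterate (k : ℕ) : ∫ x, f (T^[k] x) ∂μ = ∫ x, f x ∂μ := by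
    rw [← integral_map (hT.iterate k).aemeasurable (by simpa [(hT.iterate k).map_eq] using hf.1),
      (hT.iterate k).map_eq]
  simp only [birkhoffAverage, birkhoffSum, integral_smul]
  rw [integral_finsetSum (f := fun k x ↦ f (T^[k] x)) _ fun k _ ↦
    (hT.iterate k).integrable_comp_of_integrable hf]
  simp [integral_iterate, ← Nat.cast_smul_eq_nsmul ℝ, smul_smul, hn]

section UniqueErgodicity

variable {G E : Type*} [AddCommGroup G] [TopologicalSpace G] [IsTopologicalAddGroup G]
  [CompactSpace G] [NormedAddCommGroup E] [NormedSpace ℝ E]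

theorem equicontinuous_birkhoffAverage_add_left (a : G) (f : C(G, E)) :
    Equicontinuous (birkhoffAverage ℝ (a + ·) f) := by
  let F : C(G, C(G, E)) := ContinuousMap.curry ⟨fun p ↦ f (p.2 + p.1), by fun_prop⟩
  have dist_birkhoffAverage_le (n : ℕ) (x y : G) :
      dist (birkhoffAverage ℝ (a + ·) f n x) (birkhoffAverage ℝ (a + ·) f n y) ≤
        dist (F x) (F y) := by
    refine (dist_birkhoffAverage_birkhoffAverage_le ℝ _ _ _ _ _).trans ?_
    refine div_le_of_le_mul₀ n.cast_nonneg dist_nonneg ?_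
    refine (Finset.sum_le_card_nsmul _ _ (dist (F x) (F y)) fun k _ ↦ ?_).trans_eq (by
      simp [mul_comm])
    simp only [add_left_iterate]
    exact ContinuousMap.dist_apply_le_dist (f := F x) (g := F y) (k • a)
  refine fun x ↦ Metric.equicontinuousAt_of_continuity_modulus (fun y ↦ dist (F x) (F y)) ?_ _
    (.of_forall fun y n ↦ dist_birkhoffAverage_le n x y)
  simpa using (continuous_const.dist F.continuous).tendsto (f := fun y ↦ dist (F x) (F y)) x

theorem tendsto_birkhoffAverage_add_sub {a : G} (ha : DenseRange fun n : ℤ ↦ n • a)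
    (f : C(G, E)) (g x : G) :
    Tendsto (fun n ↦ birkhoffAverage ℝ (a + ·) f n (g + x) - birkhoffAverage ℝ (a + ·) f n x)
      atTop (𝓝 0) := by
  let A := birkhoffAverage ℝ (a + ·) f
  let P : AddSubgroup G :=
    { carrier := {g | ∀ x, Tendsto (fun n ↦ A n (g + x) - A n x) atTop (𝓝 0)}
      zero_mem' := by simp
      add_mem' := fun {g h} hg hh x ↦ by
        simpa [add_assoc] using (hg (h + x)).add (hh x)
      neg_mem' := fun {g} hg x ↦ by simpa using (hg (-g + x)).neg }
  have equicontinuous_sub (x : G) : Equicontinuous fun n g ↦ A n (g + x) - A n x := fun g ↦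
    Metric.equicontinuousAt_iff_right.2 fun ε hε ↦ by
      simpa only [dist_sub_right] using (continuous_add_const x).continuousAt.eventually
        (Metric.equicontinuousAt_iff_right.1
          (equicontinuous_birkhoffAverage_add_left a f (g + x)) ε hε)
  have isClosed_P : IsClosed (P : Set G) := by
    simp only [P, AddSubgroup.coe_set_mk, AddSubmonoid.coe_set_mk,
      AddSubsemigroup.coe_set_mk, Set.ofPred_forall]
    exact isClosed_iInter fun x ↦
      (equicontinuous_sub x).isClosed_setOfPred_tendsto continuous_const
  have a_mem : a ∈ P := fun x ↦
    tendsto_birkhoffAverage_apply_sub_birkhoffAverage' ℝ (isCompact_range f.continuous).isBounded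
      _ x
  have g_mem : g ∈ closure (P : Set G) :=
    closure_mono (Set.range_subset_iff.2 fun n ↦ P.zsmul_mem a_mem n) (ha g)
  exact isClosed_P.closure_subset g_mem x

variable [MeasurableSpace G] [BorelSpace G] [CompleteSpace E]

theorem tendsto_birkhoffAverage_add_left {a : G} (ha : DenseRange fun n : ℤ ↦ n • a)
    (μ : Measure G) [IsProbabilityMeasure μ] [μ.IsAddLeftInvariant] (f : C(G, E)) (x : G) :
    Tendsto (fun n ↦ birkhoffAverage ℝ (a + ·) f n x) atTop (𝓝 (∫ z, f z ∂μ)) := by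
  let A := birkhoffAverage ℝ (a + ·) f
  have continuous_A (n : ℕ) : Continuous (A n) :=
    (equicontinuous_birkhoffAverage_add_left a f).continuous n
  have integrable {h : G → E} (hh : Continuous h) : Integrable h μ :=
    hh.integrable_of_hasCompactSupport (.of_compactSpace h)
  have norm_A_le (n : ℕ) (g : G) : ‖A n g‖ ≤ ‖f‖ :=
    norm_birkhoffAverage_le _ (norm_nonneg f) f.norm_coe_le_norm n g
  have integral_sub_A {n : ℕ} (hn : n ≠ 0) :
      ∫ g, A n (g + x) - A n x ∂μ = ∫ z, f z ∂μ - A n x := by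
    rw [integral_sub (integrable (by fun_prop)) (integrable continuous_const),
      integral_add_right_eq_self, integral_const, probReal_univ, one_smul,
      integral_birkhoffAverage (measurePreserving_add_left μ a) (integrable f.continuous) hn]
  have tendsto_integral_sub :
      Tendsto (fun n ↦ ∫ g, A n (g + x) - A n x ∂μ) atTop (𝓝 (∫ _, 0 ∂μ)) :=
    tendsto_integral_of_dominated_convergence (fun _ ↦ ‖f‖ + ‖f‖)
      (fun n ↦ (integrable (by fun_prop)).aestronglyMeasurable) (integrable_const _)
      (fun n ↦ .of_forall fun _ ↦ norm_sub_le_of_le (norm_A_le _ _) (norm_A_le _ _))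
      (.of_forall fun g ↦ tendsto_birkhoffAverage_add_sub ha f g x)
  have tendsto_sub := tendsto_const_nhds (x := ∫ z, f z ∂μ) |>.sub tendsto_integral_sub
  rw [integral_zero, sub_zero] at tendsto_sub
  refine tendsto_sub.congr' ?_
  filter_upwards [eventually_ne_atTop 0] with n hn
  rw [integral_sub_A hn, sub_sub_cancel]

end UniqueErgodicity

section Portmanteau

variable {X : Type*} [TopologicalSpace X] [MeasurableSpace X] [OpensMeasurableSpace X]
  [HasOuterApproxClosed X]

theorem tendsto_map_of_ae_continuousAt {ι Y : Type*} {l : Filter ι} [l.IsCountablyGenerated]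
    [TopologicalSpace Y] [MeasurableSpace Y] [BorelSpace Y]
    {μs : ι → ProbabilityMeasure X} {μ : ProbabilityMeasure X}
    (hμ : Tendsto μs l (𝓝 μ)) {f : X → Y} (hf : Measurable f)
    (hfc : ∀ᵐ x ∂(μ : Measure X), ContinuousAt f x) :
    Tendsto (fun i ↦ (μs i).map hf.aemeasurable) l (𝓝 (μ.map hf.aemeasurable)) := by
  refine tendsto_of_forall_isClosed_limsup_le' fun F hF ↦ ?_
  simp only [ProbabilityMeasure.toMeasure_map, Measure.map_apply hf hF.measurableSet]
  calc limsup (fun i ↦ (μs i : Measure X) (f ⁻¹' F)) l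
      ≤ limsup (fun i ↦ (μs i : Measure X) (closure (f ⁻¹' F))) l :=
        limsup_le_limsup (.of_forall fun i ↦ measure_mono subset_closure)
    _ ≤ (μ : Measure X) (closure (f ⁻¹' F)) :=
        ProbabilityMeasure.limsup_measure_closed_le_of_tendsto hμ isClosed_closure
    _ ≤ (μ : Measure X) (f ⁻¹' F) := by
      refine measure_mono_ae ?_
      filter_upwards [hfc] with x hx hxF
      exact hF.closure_subset_iff.2 (Set.image_preimage_subset f F) (mem_closure_image hx hxF)

theorem tendsto_integral_of_ae_continuousAt {ι : Type*} {l : Filter ι} [l.IsCountablyGenerated]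
    {μs : ι → ProbabilityMeasure X} {μ : ProbabilityMeasure X} (hμ : Tendsto μs l (𝓝 μ))
    {f : X → ℝ} (hf : Measurable f) {C : ℝ} (hC : ∀ x, |f x| ≤ C)
    (hfc : ∀ᵐ x ∂(μ : Measure X), ContinuousAt f x) :
    Tendsto (fun i ↦ ∫ x, f x ∂(μs i : Measure X)) l (𝓝 (∫ x, f x ∂(μ : Measure X))) := by
  let clamp : BoundedContinuousFunction ℝ ℝ :=
    .ofNormedAddCommGroup (fun t ↦ max (-C) (min t C)) (by fun_prop) |C|
      fun t ↦ abs_le.2 ⟨(neg_abs_le_neg C).trans (le_max_left _ _),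
        max_le (neg_le_abs C) ((min_le_right t C).trans (le_abs_self C))⟩
  have clamp_f (x : X) : clamp (f x) = f x := by
    have := abs_le.1 (hC x)
    simp [clamp, this.1, this.2]
  have integral_eq (ν : ProbabilityMeasure X) :
      ∫ y, clamp y ∂(ν.map hf.aemeasurable : Measure ℝ) = ∫ x, f x ∂(ν : Measure X) := by
    simp only [ProbabilityMeasure.toMeasure_map]
    rw [integral_map hf.aemeasurable (by fun_prop)]
    simp only [clamp_f]
  simpa only [integral_eq] using ProbabilityMeasure.tendsto_iff_forall_integral_tendsto.1
    (tendsto_map_of_ae_continuousAt hμ hf hfc) clamp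

/-- The empirical measure of the orbit segment `x, T x, …, T^[n] x`; it has `n + 1` points so that
it is always a probability measure. -/
noncomputable def orbitMeasure {X : Type*} [MeasurableSpace X] (T : X → X) (x : X) (n : ℕ) :
    ProbabilityMeasure X :=
  ⟨((n + 1 : ℕ) : ENNReal)⁻¹ • birkhoffSum T Measure.dirac (n + 1) x, ⟨by
    simp [birkhoffSum, ENNReal.inv_mul_cancel]⟩⟩

theorem integral_orbitMeasure {X : Type*} [MeasurableSpace X] (T : X → X) (x : X) (n : ℕ)
    {f : X → ℝ} (hf : Measurable f) :
    ∫ y, f y ∂(orbitMeasure T x n : Measure X) = birkhoffAverage ℝ T f (n + 1) x := by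
  have integrable_dirac (k : ℕ) : Integrable f (Measure.dirac (T^[k] x)) :=
    integrable_dirac' hf.stronglyMeasurable (by simp)
  simp only [orbitMeasure, birkhoffAverage, birkhoffSum, ProbabilityMeasure.coe_mk]
  rw [integral_smul_measure, integral_finsetSum_measure fun k _ ↦ integrable_dirac k]
  simp only [integral_dirac' _ _ hf.stronglyMeasurable, ENNReal.toReal_inv, ENNReal.toReal_natCast]

theorem tendsto_birkhoffAverage_of_ae_continuousAt {T : X → X} {x : X} {μ : Measure X}
    [IsProbabilityMeasure μ]
    (hT : ∀ f : BoundedContinuousFunction X ℝ,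
      Tendsto (fun n ↦ birkhoffAverage ℝ T f n x) atTop (𝓝 (∫ y, f y ∂μ)))
    {f : X → ℝ} (hf : Measurable f) {C : ℝ} (hC : ∀ y, |f y| ≤ C)
    (hfc : ∀ᵐ y ∂μ, ContinuousAt f y) :
    Tendsto (fun n ↦ birkhoffAverage ℝ T f n x) atTop (𝓝 (∫ y, f y ∂μ)) := by
  have hμ : Tendsto (orbitMeasure T x) atTop (𝓝 (⟨μ, ‹_›⟩ : ProbabilityMeasure X)) := by
    refine ProbabilityMeasure.tendsto_iff_forall_integral_tendsto.2 fun g ↦ ?_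
    simpa only [integral_orbitMeasure T x _ g.continuous.measurable, ProbabilityMeasure.coe_mk]
      using (tendsto_add_atTop_iff_nat 1).2 (hT g)
  rw [← tendsto_add_atTop_iff_nat 1]
  simpa only [integral_orbitMeasure T x _ hf, ProbabilityMeasure.coe_mk] using
    tendsto_integral_of_ae_continuousAt hμ hf hC hfc

end Portmanteau

section Bernoulli

theorem periodizedBernoulli_coe (k : ℕ) (t : ℝ) :
    periodizedBernoulli k t = bernoulliFun k (Int.fract t) := by
  rw [← AddCircle.coe_fract, periodizedBernoulli]
  exact AddCircle.liftIco_zero_coe_apply ⟨Int.fract_nonneg t, Int.fract_lt_one t⟩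

theorem periodizedBernoulli_one_coe (t : ℝ) :
    periodizedBernoulli 1 t = Int.fract t - 1 / 2 := by
  rw [periodizedBernoulli_coe, bernoulliFun_one]

theorem abs_periodizedBernoulli_one_le (x : UnitAddCircle) : |periodizedBernoulli 1 x| ≤ 1 / 2 := by
  obtain ⟨t, rfl⟩ := QuotientAddGroup.mk_surjective x
  rw [periodizedBernoulli_one_coe, abs_le]
  constructor <;> linarith [Int.fract_nonneg t, Int.fract_lt_one t]

theorem measurable_periodizedBernoulli (k : ℕ) : Measurable (periodizedBernoulli k) :=
  (Polynomial.continuous _).measurable.comp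
    (measurable_subtype_coe.comp (AddCircle.measurableEquivIco 1 0).measurable)

theorem continuousAt_periodizedBernoulli (k : ℕ) {x : UnitAddCircle} (hx : x ≠ 0) :
    ContinuousAt (periodizedBernoulli k) x :=
  (Polynomial.continuous _).continuousAt.comp
    (continuous_subtype_val.continuousAt.comp (AddCircle.continuousAt_equivIco 1 0 hx))

theorem integrable_periodizedBernoulli_one_comp {X : Type*} [MeasurableSpace X] {μ : Measure X}
    [IsFiniteMeasure μ] {f : X → UnitAddCircle} (hf : Measurable f) :
    Integrable (fun x ↦ periodizedBernoulli 1 (f x)) μ :=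
  .of_bound ((measurable_periodizedBernoulli 1).comp hf).aestronglyMeasurable (1 / 2)
    (.of_forall fun x ↦ abs_periodizedBernoulli_one_le (f x))

theorem integrable_periodizedBernoulli_one_comp_mul_comp {X : Type*} [MeasurableSpace X]
    {μ : Measure X} [IsFiniteMeasure μ] {f g : X → UnitAddCircle} (hf : Measurable f)
    (hg : Measurable g) :
    Integrable (fun x ↦ periodizedBernoulli 1 (f x) * periodizedBernoulli 1 (g x)) μ :=
  (integrable_periodizedBernoulli_one_comp hg).bdd_mul
    ((measurable_periodizedBernoulli 1).comp hf).aestronglyMeasurable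
    (.of_forall fun x ↦ abs_periodizedBernoulli_one_le (f x))

theorem ae_ne_zero_of_measurePreserving {X : Type*} [MeasurableSpace X] {μ : Measure X}
    {φ : X → UnitAddCircle} (hφ : MeasurePreserving φ μ) : ∀ᵐ x ∂μ, φ x ≠ 0 := by
  have volume_zero : volume ({0} : Set UnitAddCircle) = 0 := by
    simp [← Metric.closedBall_zero, AddCircle.volume_closedBall]
  have ae_ne_zero : ∀ᵐ y : UnitAddCircle, y ≠ 0 := compl_mem_ae_iff.2 volume_zero
  exact hφ.quasiMeasurePreserving.ae ae_ne_zero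

theorem periodizedBernoulli_one_neg {x : UnitAddCircle} (hx : x ≠ 0) :
    periodizedBernoulli 1 (-x) = -periodizedBernoulli 1 x := by
  obtain ⟨t, rfl⟩ := QuotientAddGroup.mk_surjective x
  have ht : Int.fract t ≠ 0 := fun h ↦ hx <| by
    simpa [h] using (AddCircle.coe_fract t).symm
  change periodizedBernoulli 1 ((-t : ℝ) : UnitAddCircle) =
    -periodizedBernoulli 1 (t : UnitAddCircle)
  rw [periodizedBernoulli_one_coe, periodizedBernoulli_one_coe, Int.fract_neg ht]
  ring

theorem integral_comp_periodizedBernoulli {E : Type*} [NormedAddCommGroup E] [NormedSpace ℝ E]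
    (k : ℕ) (F : ℝ → E) :
    ∫ x, F (periodizedBernoulli k x) = ∫ t in (0 : ℝ)..1, F (bernoulliFun k t) := by
  rw [← UnitAddCircle.intervalIntegral_preimage 0, zero_add]
  refine intervalIntegral.integral_congr_Ioo_of_le zero_le_one fun t ht ↦ ?_
  rw [periodizedBernoulli, AddCircle.liftIco_zero_coe_apply (Set.Ioo_subset_Ico_self ht)]

theorem integral_periodizedBernoulli {k : ℕ} (hk : k ≠ 0) : ∫ x, periodizedBernoulli k x = 0 :=
  (integral_comp_periodizedBernoulli k id).trans (integral_bernoulliFun_eq_zero hk)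

theorem integral_periodizedBernoulli_one_comp {X : Type*} [MeasurableSpace X] {μ : Measure X}
    {φ : X → UnitAddCircle} (hφ : MeasurePreserving φ μ) :
    ∫ z, periodizedBernoulli 1 (φ z) ∂μ = 0 := by
  rw [← integral_map hφ.aemeasurable (measurable_periodizedBernoulli 1).aestronglyMeasurable,
    hφ.map_eq, integral_periodizedBernoulli one_ne_zero]

theorem integral_periodizedBernoulli_one_add_half_mul {X : Type*} [MeasurableSpace X]
    {μ : Measure X} [IsProbabilityMeasure μ] {φ ψ : X → UnitAddCircle}
    (hφ : MeasurePreserving φ μ) (hψ : MeasurePreserving ψ μ) :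
    ∫ z, (periodizedBernoulli 1 (φ z) + 1 / 2) * (periodizedBernoulli 1 (ψ z) + 1 / 2) ∂μ =
      1 / 4 + ∫ z, periodizedBernoulli 1 (φ z) * periodizedBernoulli 1 (ψ z) ∂μ := by
  have int_φ := integrable_periodizedBernoulli_one_comp (μ := μ) hφ.measurable
  have int_ψ := integrable_periodizedBernoulli_one_comp (μ := μ) hψ.measurable
  have int_mul :=
    integrable_periodizedBernoulli_one_comp_mul_comp (μ := μ) hφ.measurable hψ.measurable
  have expand (z : X) :
      (periodizedBernoulli 1 (φ z) + 1 / 2) * (periodizedBernoulli 1 (ψ z) + 1 / 2) =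
        periodizedBernoulli 1 (φ z) * periodizedBernoulli 1 (ψ z) +
          (2⁻¹ * periodizedBernoulli 1 (φ z) + (2⁻¹ * periodizedBernoulli 1 (ψ z) + 1 / 4)) := by
    ring
  simp only [expand]
  rw [integral_add int_mul (by fun_prop), integral_add (int_φ.const_mul _) (by fun_prop),
    integral_add (int_ψ.const_mul _) (integrable_const _), integral_const_mul, integral_const_mul,
    integral_periodizedBernoulli_one_comp hφ, integral_periodizedBernoulli_one_comp hψ]
  simp [add_comm]

theorem integral_periodizedBernoulli_one_sq : ∫ x, periodizedBernoulli 1 x ^ 2 = 1 / 12 := by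
  rw [integral_comp_periodizedBernoulli 1 (· ^ 2)]
  simp only [bernoulliFun_one, intervalIntegral.integral_comp_sub_right (· ^ 2), integral_pow]
  norm_num

theorem sum_zmod_eq_sum_range {M : Type*} [AddCommMonoid M] (n : ℕ) [NeZero n] (f : ℕ → M) :
    ∑ c : ZMod n, f c.val = ∑ i ∈ range n, f i :=
  Finset.sum_bij (fun c _ ↦ c.val) (fun c _ ↦ mem_range.2 c.val_lt)
    (fun _ _ _ _ h ↦ ZMod.val_injective n h)
    (fun i hi ↦ ⟨i, mem_univ _, ZMod.val_cast_of_lt (mem_range.1 hi)⟩) (fun _ _ ↦ rfl)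

theorem sum_periodizedBernoulli_coe_add_toAddCircle (k : ℕ) {n : ℕ} [NeZero n] {t : ℝ}
    (ht : t ∈ Set.Ico 0 (1 / n : ℝ)) :
    n ^ k * ∑ c : ZMod n, periodizedBernoulli k (t + ZMod.toAddCircle c) =
      n * periodizedBernoulli k (n • (t : UnitAddCircle)) := by
  have hn : (0 : ℝ) < n := mod_cast NeZero.pos n
  have mul_t_mem : n * t ∈ Set.Ico (0 : ℝ) 1 :=
    ⟨mul_nonneg hn.le ht.1, by simpa [mul_comm] using (lt_div_iff₀ hn).1 ht.2⟩
  have add_mem (c : ZMod n) : t + c.val / n ∈ Set.Ico (0 : ℝ) 1 := by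
    have hc : (c.val + 1 : ℝ) ≤ n := mod_cast c.val_lt
    refine ⟨add_nonneg ht.1 (by positivity), ?_⟩
    calc t + c.val / n < 1 / n + c.val / n := by gcongr; exact ht.2
      _ = (c.val + 1) / n := by ring
      _ ≤ 1 := div_le_one_of_le₀ hc hn.le
  have term_eq (c : ZMod n) :
      periodizedBernoulli k (t + ZMod.toAddCircle c) = bernoulliFun k (t + c.val / n) := by
    rw [ZMod.toAddCircle_apply, ← AddCircle.coe_add, periodizedBernoulli_coe,
      Int.fract_eq_self.2 (add_mem c)]
  rw [← AddCircle.coe_nsmul, nsmul_eq_mul, periodizedBernoulli_coe, Int.fract_eq_self.2 mul_t_mem,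
    bernoulliFun_mul k (NeZero.ne n), Finset.sum_congr rfl fun c _ ↦ term_eq c,
    sum_zmod_eq_sum_range n fun i ↦ bernoulliFun k (t + i / n)]
  field_simp

theorem sum_periodizedBernoulli_add_toAddCircle (k n : ℕ) [NeZero n] (x : UnitAddCircle) :
    n ^ k * ∑ c : ZMod n, periodizedBernoulli k (x + ZMod.toAddCircle c) =
      n * periodizedBernoulli k (n • x) := by
  obtain ⟨t, rfl⟩ := QuotientAddGroup.mk_surjective x
  -- Translating by a multiple of `1 / n` permutes the sum, so we may move `t` into `[0, 1 / n)`.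
  have hn : (0 : ℝ) < n := mod_cast NeZero.pos n
  let y : ℝ := Int.fract (n * t) / n
  let m : ZMod n := ⌊n * t⌋
  have hy : y ∈ Set.Ico 0 (1 / n : ℝ) :=
    ⟨div_nonneg (Int.fract_nonneg _) hn.le, div_lt_div_of_pos_right (Int.fract_lt_one _) hn⟩
  have coe_t : (t : UnitAddCircle) = y + ZMod.toAddCircle m := by
    rw [ZMod.toAddCircle_intCast, ← AddCircle.coe_add, ← add_div, Int.fract_add_floor,
      mul_div_cancel_left₀ t hn.ne']
  have nsmul_toAddCircle : n • ZMod.toAddCircle m = 0 := by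
    rw [← map_nsmul, nsmul_eq_mul, CharP.cast_eq_zero, zero_mul, map_zero]
  change _ * ∑ c : ZMod n, periodizedBernoulli k ((t : UnitAddCircle) + _) =
    _ * periodizedBernoulli k (n • (t : UnitAddCircle))
  rw [coe_t, nsmul_add, nsmul_toAddCircle, add_zero,
    ← sum_periodizedBernoulli_coe_add_toAddCircle k hy]
  simp only [add_assoc, ← map_add]
  exact congrArg _ <| Equiv.sum_comp (Equiv.addLeft m) fun c ↦
    periodizedBernoulli k (y + ZMod.toAddCircle c)

theorem sum_periodizedBernoulli_one_add_toAddCircle_mul {n : ℕ} [NeZero n] {u : ZMod n}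
    (hu : IsUnit u) (x : UnitAddCircle) :
    ∑ c : ZMod n, periodizedBernoulli 1 (x + ZMod.toAddCircle (u * c)) =
      periodizedBernoulli 1 (n • x) := by
  have permute : ∑ c : ZMod n, periodizedBernoulli 1 (x + ZMod.toAddCircle (u * c)) =
      ∑ c : ZMod n, periodizedBernoulli 1 (x + ZMod.toAddCircle c) :=
    Equiv.sum_comp hu.unit.mulLeft fun c ↦ periodizedBernoulli 1 (x + ZMod.toAddCircle c)
  rw [permute]
  refine mul_left_cancel₀ (NeZero.ne (n : ℝ)) ?_
  simpa only [pow_one] using sum_periodizedBernoulli_add_toAddCircle 1 n x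

end Bernoulli

section Correlation

/-- The correlation `∫ B(ax) B(bx) dx` over the circle of two dilates of the first periodized
Bernoulli function `B(x) = {x} - 1/2`. -/
noncomputable def bernoulliCorr (a b : ℤ) : ℝ :=
  ∫ x : UnitAddCircle, periodizedBernoulli 1 (a • x) * periodizedBernoulli 1 (b • x)

theorem bernoulliCorr_comm (a b : ℤ) : bernoulliCorr a b = bernoulliCorr b a := by
  simp only [bernoulliCorr, mul_comm]

theorem bernoulliCorr_one_one : bernoulliCorr 1 1 = 1 / 12 := by
  simpa only [bernoulliCorr, one_zsmul, ← sq] using integral_periodizedBernoulli_one_sq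

theorem bernoulliCorr_mul_left {c : ℤ} (hc : c ≠ 0) (a b : ℤ) :
    bernoulliCorr (c * a) (c * b) = bernoulliCorr a b := by
  have zsmul_preserves := Measure.measurePreserving_zsmul (volume : Measure UnitAddCircle) hc
  have := integral_map zsmul_preserves.aemeasurable
    (integrable_periodizedBernoulli_one_comp_mul_comp
      (μ := .map (fun x : UnitAddCircle ↦ c • x) volume)
      (measurable_const_smul a) (measurable_const_smul b)).aestronglyMeasurable
  rw [zsmul_preserves.map_eq] at this
  simpa only [bernoulliCorr, mul_comm c, mul_zsmul] using this.symm

theorem bernoulliCorr_neg_left {a : ℤ} (ha : a ≠ 0) (b : ℤ) :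
    bernoulliCorr (-a) b = -bernoulliCorr a b := by
  rw [bernoulliCorr, bernoulliCorr, ← integral_neg]
  refine integral_congr_ae ?_
  filter_upwards [ae_ne_zero_of_measurePreserving (Measure.measurePreserving_zsmul volume ha)]
    with x hx
  rw [neg_zsmul, periodizedBernoulli_one_neg hx, neg_mul]

theorem natCast_mul_bernoulliCorr {n : ℕ} [NeZero n] {b : ℤ} (hnb : IsCoprime (n : ℤ) b) :
    n * bernoulliCorr n b = bernoulliCorr 1 b := by
  have hb : IsUnit (b : ZMod n) := (ZMod.coe_int_isUnit_iff_isCoprime b n).2 hnb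
  have nsmul_toAddCircle (c : ZMod n) : (n : ℤ) • ZMod.toAddCircle c = 0 := by
    rw [← map_zsmul]; simp
  have translate (c : ZMod n) : bernoulliCorr n b = ∫ x : UnitAddCircle,
      periodizedBernoulli 1 (n • x) *
        periodizedBernoulli 1 (b • x + ZMod.toAddCircle ((b : ZMod n) * c)) := by
    rw [bernoulliCorr, ← integral_add_right_eq_self _ (ZMod.toAddCircle c)]
    simp only [zsmul_add, nsmul_toAddCircle, add_zero, natCast_zsmul, ← map_zsmul, zsmul_eq_mul]
  calc n * bernoulliCorr n b
      = ∑ _c : ZMod n, bernoulliCorr n b := by simp [ZMod.card]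
    _ = ∑ c : ZMod n, ∫ x : UnitAddCircle,
          periodizedBernoulli 1 (n • x) *
            periodizedBernoulli 1 (b • x + ZMod.toAddCircle ((b : ZMod n) * c)) :=
        Finset.sum_congr rfl fun c _ ↦ translate c
    _ = ∫ x : UnitAddCircle, periodizedBernoulli 1 (n • x) * periodizedBernoulli 1 (n • b • x) := by
      rw [← integral_finsetSum]
      · simp only [← Finset.mul_sum, sum_periodizedBernoulli_one_add_toAddCircle_mul hb]
      · exact fun c _ ↦ integrable_periodizedBernoulli_one_comp_mul_comp (by fun_prop) (by fun_prop)
    _ = bernoulliCorr (n * 1) (n * b) := by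
      simp only [bernoulliCorr, mul_one, mul_zsmul, natCast_zsmul]
    _ = bernoulliCorr 1 b := bernoulliCorr_mul_left (mod_cast NeZero.ne n) 1 b

theorem intCast_mul_bernoulliCorr {a b : ℤ} (ha : a ≠ 0) (hab : IsCoprime a b) :
    a * bernoulliCorr a b = bernoulliCorr 1 b := by
  obtain ⟨n, rfl | rfl⟩ := a.eq_nat_or_neg
  · have : NeZero n := ⟨mod_cast ha⟩
    exact_mod_cast natCast_mul_bernoulliCorr hab
  · have hn : n ≠ 0 := by simpa using ha
    have : NeZero n := ⟨hn⟩
    rw [bernoulliCorr_neg_left (mod_cast hn),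
      ← natCast_mul_bernoulliCorr ((IsCoprime.neg_left_iff _ _).1 hab)]
    push_cast
    ring

theorem bernoulliCorr_of_isCoprime {a b : ℤ} (ha : a ≠ 0) (hb : b ≠ 0) (hab : IsCoprime a b) :
    bernoulliCorr a b = 1 / (12 * a * b) := by
  have : (b : ℝ) * (a * bernoulliCorr a b) = 1 / 12 := by
    rw [intCast_mul_bernoulliCorr ha hab, bernoulliCorr_comm,
      intCast_mul_bernoulliCorr hb isCoprime_one_right, bernoulliCorr_one_one]
  field_simp
  linarith

theorem bernoulliCorr_eq {a b : ℤ} (ha : a ≠ 0) (hb : b ≠ 0) :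
    bernoulliCorr a b = (Int.gcd a b : ℝ) ^ 2 / (12 * a * b) := by
  obtain ⟨g, a', b', hg, hab, rfl, rfl⟩ := Int.exists_gcd_one' (Int.gcd_pos_of_ne_zero_left b ha)
  have ha' : (a' : ℝ) ≠ 0 := mod_cast left_ne_zero_of_mul ha
  have hb' : (b' : ℝ) ≠ 0 := mod_cast left_ne_zero_of_mul hb
  rw [mul_comm a', mul_comm b', bernoulliCorr_mul_left (mod_cast hg.ne'),
    bernoulliCorr_of_isCoprime (mod_cast ha') (mod_cast hb') (Int.isCoprime_iff_gcd_eq_one.2 hab),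
    Int.gcd_mul_left, hab]
  push_cast
  field_simp
  simp

end Correlation

section Product

theorem denseRange_zsmul_prodMk_one {G : Type*} [AddCommGroup G] [TopologicalSpace G]
    [IsTopologicalAddGroup G] {q : ℕ} [NeZero q] {x : G} (hx : DenseRange fun n : ℤ ↦ n • q • x) :
    DenseRange fun n : ℤ ↦ n • (x, (1 : ZMod q)) := by
  let a : G × ZMod q := (x, 1)
  let H : AddSubgroup (G × ZMod q) := (AddSubgroup.zmultiples a).topologicalClosure
  have isClosed_H : IsClosed (H : Set (G × ZMod q)) := AddSubgroup.isClosed_topologicalClosure _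
  have a_mem : a ∈ H := AddSubgroup.le_topologicalClosure _ (AddSubgroup.mem_zmultiples a)
  have mem_of_snd_eq_zero (y : G) : (y, 0) ∈ H := by
    refine hx.induction_on (p := fun y ↦ (y, 0) ∈ H) y
      (isClosed_H.preimage (by fun_prop)) fun n ↦ ?_
    have : (n • q • x, (0 : ZMod q)) = n • q • a := by simp [a]
    exact this ▸ H.zsmul_mem (H.nsmul_mem a_mem q) n
  rintro ⟨y, c⟩
  have : (y, c) = c.val • a + (y - c.val • x, 0) := by simp [a]
  have mem : (y, c) ∈ H := this ▸ H.add_mem (H.nsmul_mem a_mem _) (mem_of_snd_eq_zero _)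
  rwa [← SetLike.mem_coe, AddSubgroup.topologicalClosure_coe, AddSubgroup.coe_zmultiples] at mem

/-- The homomorphism `(x, c) ↦ r x + p c / q` from `ℝ/ℤ × ℤ/q` to `ℝ/ℤ`; it maps the multiples of
`(θ, 1)` to the sequence `j (r θ + p / q)`. -/
noncomputable def circleZModHom {q : ℕ} [NeZero q] (r : ℤ) (p : ZMod q) :
    UnitAddCircle × ZMod q →+ UnitAddCircle :=
  (zsmulAddGroupHom r).coprod (ZMod.toAddCircle.comp (AddMonoidHom.mulLeft p))

variable {q : ℕ} [NeZero q]

theorem circleZModHom_apply (r : ℤ) (p : ZMod q) (z : UnitAddCircle × ZMod q) :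
    circleZModHom r p z = r • z.1 + ZMod.toAddCircle (p * z.2) :=
  rfl

theorem continuous_circleZModHom (r : ℤ) (p : ZMod q) : Continuous (circleZModHom r p) := by
  have := continuous_of_discreteTopology (f := fun c : ZMod q ↦ ZMod.toAddCircle (p * c))
  exact (continuous_fst.zsmul r).add (this.comp continuous_snd)

theorem surjective_circleZModHom {r : ℤ} (hr : r ≠ 0) (p : ZMod q) :
    Function.Surjective (circleZModHom r p) := fun y ↦ by
  obtain ⟨x, hx⟩ := DivisibleBy.surjective_smul UnitAddCircle ℤ hr y
  exact ⟨(x, 0), by simpa [circleZModHom_apply] using hx⟩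

/-- The uniform probability measure on `ℝ/ℤ × ℤ/q`, the limit distribution of the multiples of
`(θ, 1)` for irrational `θ`. -/
noncomputable def uniformCircleZMod (q : ℕ) : Measure (UnitAddCircle × ZMod q) :=
  volume.prod ((q : ENNReal)⁻¹ • Measure.count)

instance : IsProbabilityMeasure (uniformCircleZMod q) := by
  have : IsProbabilityMeasure ((q : ENNReal)⁻¹ • Measure.count : Measure (ZMod q)) := ⟨by
    simp [ENNReal.inv_mul_cancel, NeZero.ne q, Measure.count_univ]⟩
  have : IsProbabilityMeasure (volume : Measure UnitAddCircle) := ⟨UnitAddCircle.measure_univ⟩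
  unfold uniformCircleZMod
  infer_instance

instance : (uniformCircleZMod q).IsAddLeftInvariant := by
  unfold uniformCircleZMod
  infer_instance

theorem integral_periodizedBernoulli_one_circleZModHom_mul (r s : ℤ) {p : ZMod q}
    (hp : IsUnit p) :
    ∫ z, periodizedBernoulli 1 (circleZModHom s 0 z) * periodizedBernoulli 1 (circleZModHom r p z)
      ∂(uniformCircleZMod q) = bernoulliCorr s (q * r) / q := by
  have fibre (x : UnitAddCircle) :
      ∫ c : ZMod q, periodizedBernoulli 1 (s • x) *
          periodizedBernoulli 1 (r • x + ZMod.toAddCircle (p * c))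
          ∂((q : ENNReal)⁻¹ • Measure.count) =
        (q : ℝ)⁻¹ *
          (periodizedBernoulli 1 (s • x) * periodizedBernoulli 1 (((q : ℤ) * r) • x)) := by
    rw [integral_smul_measure, integral_count, ← Finset.mul_sum,
      sum_periodizedBernoulli_one_add_toAddCircle_mul hp]
    simp [mul_zsmul]
  rw [uniformCircleZMod, integral_prod]
  · simp only [circleZModHom_apply, zero_mul, map_zero, add_zero, fibre, integral_const_mul]
    rw [bernoulliCorr, div_eq_inv_mul]
  · exact integrable_periodizedBernoulli_one_comp_mul_comp (μ := uniformCircleZMod q)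
      (continuous_circleZModHom s 0).measurable (continuous_circleZModHom r p).measurable

end Product

section Limit

variable {G : Type*} [AddCommGroup G] [TopologicalSpace G] [IsTopologicalAddGroup G]
  [CompactSpace G] [MeasurableSpace G] [BorelSpace G]

theorem measurePreserving_unitAddCircle (μ : Measure G) [IsProbabilityMeasure μ]
    [μ.IsAddLeftInvariant] {φ : G →+ UnitAddCircle} (hφ : Continuous φ)
    (hφ' : Function.Surjective φ) : MeasurePreserving φ μ := by
  have : μ.IsAddHaarMeasure :=
    Measure.isAddHaarMeasure_of_isCompact_nonempty_interior μ Set.univ isCompact_univ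
      (by simp) (by simp) (by simp)
  exact AddMonoidHom.measurePreserving hφ hφ' (by rw [measure_univ, UnitAddCircle.measure_univ])

theorem tendsto_sum_nsmul_of_ae_continuousAt [HasOuterApproxClosed G] {a : G}
    (ha : DenseRange fun n : ℤ ↦ n • a) (μ : Measure G) [IsProbabilityMeasure μ]
    [μ.IsAddLeftInvariant] {f : G → ℝ} (hf : Measurable f) {C : ℝ} (hC : ∀ z, |f z| ≤ C)
    (hfc : ∀ᵐ z ∂μ, ContinuousAt f z) :
    Tendsto (fun n : ℕ ↦ (1 / n : ℝ) * ∑ j ∈ Icc 1 n, f (j • a)) atTop (𝓝 (∫ z, f z ∂μ)) := by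
  have birkhoffAverage_eq (n : ℕ) :
      birkhoffAverage ℝ (a + ·) f n a = (1 / n : ℝ) * ∑ j ∈ Icc 1 n, f (j • a) := by
    rw [birkhoffAverage, birkhoffSum, smul_eq_mul, one_div, ← Ico_add_one_right_eq_Icc,
      sum_Ico_eq_sum_range, Nat.add_sub_cancel]
    simp only [add_left_iterate, add_comm 1, succ_nsmul]
  simpa only [birkhoffAverage_eq] using tendsto_birkhoffAverage_of_ae_continuousAt
    (fun g ↦ tendsto_birkhoffAverage_add_left ha μ g.toContinuousMap a) hf hC hfc

theorem tendsto_sum_fract_mul_fract [HasOuterApproxClosed G] {a : G}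
    (ha : DenseRange fun n : ℤ ↦ n • a) (μ : Measure G) [IsProbabilityMeasure μ]
    [μ.IsAddLeftInvariant] {φ ψ : G →+ UnitAddCircle} (hφ : Continuous φ)
    (hφ' : Function.Surjective φ) (hψ : Continuous ψ) (hψ' : Function.Surjective ψ) {α β : ℝ}
    (hα : φ a = α) (hβ : ψ a = β) :
    Tendsto (fun n : ℕ ↦ (1 / n : ℝ) * ∑ j ∈ Icc 1 n, Int.fract (j * α) * Int.fract (j * β)) atTop
      (𝓝 (1 / 4 + ∫ z, periodizedBernoulli 1 (φ z) * periodizedBernoulli 1 (ψ z) ∂μ)) := by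
  let frac (x : UnitAddCircle) : ℝ := periodizedBernoulli 1 x + 1 / 2
  have frac_coe (t : ℝ) : frac t = Int.fract t := by
    simp only [frac, periodizedBernoulli_one_coe, sub_add_cancel]
  have frac_nsmul {χ : G →+ UnitAddCircle} {t : ℝ} (h : χ a = t) (j : ℕ) :
      frac (χ (j • a)) = Int.fract (j * t) := by
    rw [map_nsmul, h, ← AddCircle.coe_nsmul, frac_coe, nsmul_eq_mul]
  have abs_frac_le (x : UnitAddCircle) : |frac x| ≤ 1 :=
    (abs_add_le _ _).trans <| by
      rw [abs_of_pos (one_half_pos (α := ℝ))]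
      linarith [abs_periodizedBernoulli_one_le x]
  have measurable_frac : Measurable frac := (measurable_periodizedBernoulli 1).add_const _
  have hφμ := measurePreserving_unitAddCircle μ hφ hφ'
  have hψμ := measurePreserving_unitAddCircle μ hψ hψ'
  have ae_continuousAt : ∀ᵐ z ∂μ, ContinuousAt (fun z ↦ frac (φ z) * frac (ψ z)) z := by
    filter_upwards [ae_ne_zero_of_measurePreserving hφμ, ae_ne_zero_of_measurePreserving hψμ]
      with z hz hz'
    exact (((continuousAt_periodizedBernoulli 1 hz).comp hφ.continuousAt).add_const _).mul
      (((continuousAt_periodizedBernoulli 1 hz').comp hψ.continuousAt).add_const _)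
  have abs_le (z : G) : |frac (φ z) * frac (ψ z)| ≤ 1 := by
    rw [abs_mul]
    exact mul_le_one₀ (abs_frac_le _) (abs_nonneg _) (abs_frac_le _)
  have := tendsto_sum_nsmul_of_ae_continuousAt ha μ
    (f := fun z ↦ frac (φ z) * frac (ψ z)) (by fun_prop) abs_le ae_continuousAt
  simpa only [frac_nsmul hα, frac_nsmul hβ, frac,
    integral_periodizedBernoulli_one_add_half_mul hφμ hψμ] using this

end Limit

theorem tendsto_sum_fract_int_mul_mul_fract_add {θ : ℝ} (hθ : Irrational θ) {q : ℕ} [NeZero q]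
    {p r s : ℤ} (hp : IsUnit (p : ZMod q)) (hr : r ≠ 0) (hs : s ≠ 0) :
    Tendsto (fun n : ℕ ↦ (1 / n : ℝ) *
        ∑ j ∈ Icc 1 n, Int.fract (j * (s * θ)) * Int.fract (j * (p / q + r * θ)))
      atTop (𝓝 (1 / 4 + bernoulliCorr s (q * r) / q)) := by
  have map_left : circleZModHom s (0 : ZMod q) (θ, 1) = (s * θ : ℝ) := by
    rw [circleZModHom_apply, zero_mul, map_zero, add_zero, ← AddCircle.coe_zsmul, zsmul_eq_mul]
  have map_right : circleZModHom r (p : ZMod q) (θ, 1) = (p / q + r * θ : ℝ) := by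
    rw [circleZModHom_apply, mul_one, ZMod.toAddCircle_intCast, ← AddCircle.coe_zsmul,
      ← AddCircle.coe_add, zsmul_eq_mul, add_comm]
  have dense : DenseRange fun n : ℤ ↦ n • q • (θ : UnitAddCircle) := by
    simp only [← AddCircle.coe_nsmul, nsmul_eq_mul]
    exact AddCircle.denseRange_zsmul_coe_iff.2 (by simpa using hθ.natCast_mul (NeZero.ne q))
  rw [← integral_periodizedBernoulli_one_circleZModHom_mul r s hp]
  exact tendsto_sum_fract_mul_fract (G := UnitAddCircle × ZMod q)
    (denseRange_zsmul_prodMk_one dense) (uniformCircleZMod q)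
    (continuous_circleZModHom s (0 : ZMod q)) (surjective_circleZModHom hs (0 : ZMod q))
    (continuous_circleZModHom r (p : ZMod q)) (surjective_circleZModHom hr (p : ZMod q))
    map_left map_right

/-- Let `α` be irrational, `p, q` coprime with `q > 0`, `r ≠ 0` and `s > 0` coprime,
and `β = p/q + (r/s)α`. Then
`lim_{n→∞} (1/n) ∑_{j=1}^n {jα}{jβ} = 1/4 + gcd(s,q)²/(12srq²)`. -/
theorem stmt_14 (α : ℝ) (hα : Irrational α) (p q r s : ℤ)
    (hq : 0 < q) (hpq : Int.gcd p q = 1) (hr : r ≠ 0) (hs : 0 < s) (hrs : Int.gcd r s = 1)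
    (β : ℝ) (hβ : β = (p : ℝ) / (q : ℝ) + ((r : ℝ) / (s : ℝ)) * α) :
    Tendsto
      (fun n : ℕ =>
        (1 / (n : ℝ)) *
          ∑ j ∈ Finset.Icc 1 n, Int.fract ((j : ℝ) * α) * Int.fract ((j : ℝ) * β))
      atTop
      (nhds (1 / 4 + (Int.gcd s q : ℝ) ^ 2 / (12 * (s : ℝ) * (r : ℝ) * (q : ℝ) ^ 2))) := by
  lift q to ℕ using hq.le
  have : NeZero q := ⟨mod_cast hq.ne'⟩
  have hs' : (s : ℝ) ≠ 0 := mod_cast hs.ne'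
  have isUnit_p : IsUnit (p : ZMod q) :=
    (ZMod.coe_int_isUnit_iff_isCoprime p q).2 (Int.isCoprime_iff_gcd_eq_one.2 hpq).symm
  have hα_eq : s * (α / s) = α := mul_div_cancel₀ α hs'
  have hβ_eq : (p / q + r * (α / s) : ℝ) = β := by
    rw [hβ, Int.cast_natCast, mul_div_assoc', div_mul_eq_mul_div]
  have gcd_eq : Int.gcd s (q * r) = Int.gcd s q :=
    Int.gcd_mul_left_right_of_gcd_eq_one (Int.gcd_comm r s ▸ hrs)
  have corr_eq :
      bernoulliCorr s (q * r) / q = (Int.gcd s q : ℝ) ^ 2 / (12 * s * r * (q : ℤ) ^ 2) := by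
    rw [bernoulliCorr_eq hs.ne' (mul_ne_zero hq.ne' hr), gcd_eq, div_div]
    push_cast
    ring
  simpa only [hα_eq, hβ_eq, corr_eq] using
    tendsto_sum_fract_int_mul_mul_fract_add (hα.div_intCast hs.ne') isUnit_p hr hs.ne'
end

section
/- Let θ > 0. For all integers 1 ≤ j ≤ n, ∑_{p=j}^{n−1} A_{p−j}^{θ−1} / (p · A_p^{θ}) = Ψ_n(j)(1/j − 1/n), where for δ ∈ ℝ the Cesàro number A_m^{δ} is defined by A_m^{δ} := ((m+δ)(m−1+δ)⋯(1+δ))/m! (with A_0^{δ} = 1). -/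
open Finset

/-- `Ψ_n(j) = ∏_{i=0}^{j−1} (n−i)/(θ+n−1−i)`. -/
noncomputable def Psi (θ : ℝ) (n j : ℕ) : ℝ :=
  ∏ i ∈ Finset.range j, ((n : ℝ) - i) / (θ + (n : ℝ) - 1 - i)

/-- The Cesàro number `A_m^δ = ∏_{i=1}^m (i+δ)/i` (with `A_0^δ = 1`). -/
noncomputable def cesaroA (δ : ℝ) (m : ℕ) : ℝ :=
  ∏ i ∈ Finset.Icc 1 m, ((i : ℝ) + δ) / (i : ℝ)

/-! Since `Ψ_n(j) A_n^{θ-1} = A_{n-j}^{θ-1}` and `θ A_p^θ = (θ + p) A_p^{θ-1}`, the `p`-th summand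
is `θ Ψ_p(j) / (p (θ + p))`. This is the increment of `Ψ_n(j) (1/j - 1/n)` from `n = p` to
`n = p + 1`, so the sum telescopes, and the boundary value at `n = j` vanishes. -/

theorem cesaroA_zero (δ : ℝ) : cesaroA δ 0 = 1 := by
  simp [cesaroA]

theorem cesaroA_succ (δ : ℝ) (m : ℕ) :
    cesaroA δ (m + 1) = cesaroA δ m * ((m + 1 + δ) / (m + 1)) := by
  rw [cesaroA, prod_Icc_succ_top (Nat.le_add_left 1 m), ← cesaroA, Nat.cast_succ]

theorem cesaroA_ne_zero {δ : ℝ} (hδ : ∀ k : ℕ, δ ≠ -(k + 1)) (m : ℕ) : cesaroA δ m ≠ 0 := by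
  induction m with
  | zero => simp [cesaroA_zero]
  | succ m ih =>
    have hnum : (m + 1 + δ : ℝ) ≠ 0 := fun h ↦ hδ m (eq_neg_of_add_eq_zero_right h)
    rw [cesaroA_succ]
    exact mul_ne_zero ih (div_ne_zero hnum m.cast_add_one_ne_zero)

theorem mul_cesaroA (δ : ℝ) (m : ℕ) : δ * cesaroA δ m = (δ + m) * cesaroA (δ - 1) m := by
  induction m with
  | zero => simp [cesaroA_zero]
  | succ m ih =>
    rw [cesaroA_succ, cesaroA_succ, ← mul_assoc, ih]
    push_cast
    ring

theorem psi_zero_right (θ : ℝ) (n : ℕ) : Psi θ n 0 = 1 := by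
  simp [Psi]

theorem psi_succ_right (θ : ℝ) (n j : ℕ) :
    Psi θ n (j + 1) = Psi θ n j * ((n - j) / (θ + n - 1 - j)) :=
  prod_range_succ _ _

theorem psi_succ_succ (θ : ℝ) (n j : ℕ) :
    Psi θ (n + 1) (j + 1) = Psi θ n j * ((n + 1) / (θ + n)) := by
  simp only [Psi, prod_range_succ', Nat.cast_succ, Nat.cast_zero, sub_zero,
    ← add_assoc, add_sub_cancel_right, sub_add_eq_sub_sub_swap]

theorem psi_succ_left {θ : ℝ} {n j : ℕ} (hθ : θ + n - j ≠ 0) (hj : (n + 1 - j : ℝ) ≠ 0) :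
    Psi θ (n + 1) j = Psi θ n j * ((n + 1) * (θ + n - j) / ((n + 1 - j) * (θ + n))) := by
  have h : Psi θ (n + 1) j * ((n + 1 - j) / (θ + n - j)) = Psi θ n j * ((n + 1) / (θ + n)) := by
    rw [← psi_succ_succ, psi_succ_right, Nat.cast_succ, ← add_assoc, add_sub_cancel_right]
  rw [eq_div_of_mul_eq (div_ne_zero hj hθ) h]
  field_simp

theorem psi_mul_cesaroA {θ : ℝ} (hθ : ∀ k : ℕ, θ ≠ -k) {n j : ℕ} (hjn : j ≤ n) :
    Psi θ n j * cesaroA (θ - 1) n = cesaroA (θ - 1) (n - j) := by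
  obtain ⟨m, rfl⟩ := Nat.exists_eq_add_of_le' hjn
  clear hjn
  rw [Nat.add_sub_cancel]
  induction j with
  | zero => simp [psi_zero_right]
  | succ j ih =>
    have hden : θ + (m + j : ℕ) ≠ 0 := fun h ↦ hθ _ (eq_neg_of_add_eq_zero_left h)
    have hnum : ((m + j : ℕ) + 1 : ℝ) ≠ 0 := Nat.cast_add_one_ne_zero _
    rw [← add_assoc, psi_succ_succ, cesaroA_succ, ← ih]
    field_simp
    ring

theorem cesaroA_sub_one_div_cesaroA {θ : ℝ} (hθ : ∀ k : ℕ, θ ≠ -k) {n j : ℕ} (hjn : j ≤ n) :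
    cesaroA (θ - 1) (n - j) / cesaroA θ n = θ * Psi θ n j / (θ + n) := by
  have hA : cesaroA θ n ≠ 0 := cesaroA_ne_zero (fun k ↦ by exact_mod_cast hθ (k + 1)) n
  have hn : θ + n ≠ 0 := fun h ↦ hθ n (eq_neg_of_add_eq_zero_left h)
  rw [← psi_mul_cesaroA hθ hjn, div_eq_div_iff hA hn]
  linear_combination -Psi θ n j * mul_cesaroA θ n

theorem psi_succ_mul_sub_psi_mul {θ : ℝ} (hθ : ∀ k : ℕ, θ ≠ -k) {n j : ℕ} (hj : 1 ≤ j)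
    (hjn : j ≤ n) :
    Psi θ (n + 1) j * (1 / j - 1 / (n + 1 : ℕ)) - Psi θ n j * (1 / j - 1 / n) =
      θ * Psi θ n j / (n * (θ + n)) := by
  have hn : θ + n ≠ 0 := fun h ↦ hθ n (eq_neg_of_add_eq_zero_left h)
  have hnj : θ + n - j ≠ 0 := fun h ↦ hθ (n - j) (by push_cast [hjn]; linarith)
  have hj₁ : (1 : ℝ) ≤ j := by exact_mod_cast hj
  have hjn' : (j : ℝ) ≤ n := by exact_mod_cast hjn
  have hj₀ : (j : ℝ) ≠ 0 := by linarith
  have hn₀ : (n : ℝ) ≠ 0 := by linarith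
  have hn₁ : (n + 1 : ℝ) ≠ 0 := by linarith
  have hnj₁ : (n + 1 - j : ℝ) ≠ 0 := by linarith
  rw [psi_succ_left hnj hnj₁, Nat.cast_succ]
  field_simp
  ring

theorem stmt_18_general (θ : ℝ) (hθ : ∀ k : ℕ, θ ≠ -k) (n j : ℕ) (hj : 1 ≤ j) (hjn : j ≤ n) :
    ∑ p ∈ Ico j n, cesaroA (θ - 1) (p - j) / (p * cesaroA θ p) =
      Psi θ n j * (1 / j - 1 / n) := by
  have hstep : ∀ p ∈ Ico j n, cesaroA (θ - 1) (p - j) / (p * cesaroA θ p) =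
      Psi θ (p + 1) j * (1 / j - 1 / (p + 1 : ℕ)) - Psi θ p j * (1 / j - 1 / p) := by
    intro p hp
    have hjp : j ≤ p := (mem_Ico.mp hp).1
    rw [psi_succ_mul_sub_psi_mul hθ hj hjp, div_mul_eq_div_div_swap,
      cesaroA_sub_one_div_cesaroA hθ hjp, div_mul_eq_div_div_swap]
  rw [sum_congr rfl hstep, sum_Ico_sub (fun p ↦ Psi θ p j * (1 / j - 1 / p)) hjn, sub_self,
    mul_zero, sub_zero]

/-- For all `1 ≤ j ≤ n`,
`∑_{p=j}^{n−1} A_{p−j}^{θ−1}/(p A_p^θ) = Ψ_n(j)(1/j − 1/n)`. -/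
theorem stmt_18 (θ : ℝ) (hθ : 0 < θ) (n j : ℕ) (hj : 1 ≤ j) (hjn : j ≤ n) :
    ∑ p ∈ Finset.Ico j n, cesaroA (θ - 1) (p - j) / ((p : ℝ) * cesaroA θ p)
      = Psi θ n j * (1 / (j : ℝ) - 1 / (n : ℝ)) :=
  stmt_18_general θ (fun k ↦ ((neg_nonpos.mpr k.cast_nonneg).trans_lt hθ).ne') n j hj hjn
end
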